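/- arXiv:math/0507361 — 4 statements merged into one kernel-verified Lean document; each statement's English description precedes it below -/
import Mathlib

section
/- Let λ₃ ∈ ℝ with λ₃ ≠ 0. A pair (x, y) ∈ ℝ² satisfies both x² − y² = 1 − 4λ₃² and x² + (y − (1 − 12λ₃²)/(4λ₃))² = (1 + 16λ₃⁴)/(16λ₃²) if and only if either (y = −λ₃ and x² = 1 − 3λ₃², which is possible only when 3λ₃² ≤ 1) or (y = (1 − 8λ₃²)/(4λ₃) and x² = 1/(16λ₃²)). -/
/-!
Subtracting the equation of the hyperbola from that of the circle eliminates `x ^ 2` and leaves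
the quadratic `2 * (y + l₃) * (y - (1 - 8 * l₃ ^ 2) / (4 * l₃)) = 0` in `y`. The hyperbola then
gives `x ^ 2` at each of the two roots; at `y = -l₃` the inequality `3 * l₃ ^ 2 ≤ 1` is just
`0 ≤ x ^ 2`.
-/

/-- The common points of the hyperbola and the circle occurring
in Case 2 (m₁ = 1) of Section 4. -/
theorem stmt_6 (l₃ : ℝ) (h : l₃ ≠ 0) (x y : ℝ) :
    (x ^ 2 - y ^ 2 = 1 - 4 * l₃ ^ 2 ∧
      x ^ 2 + (y - (1 - 12 * l₃ ^ 2) / (4 * l₃)) ^ 2 = (1 + 16 * l₃ ^ 4) / (16 * l₃ ^ 2)) ↔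
    ((y = -l₃ ∧ x ^ 2 = 1 - 3 * l₃ ^ 2 ∧ 3 * l₃ ^ 2 ≤ 1) ∨
      (y = (1 - 8 * l₃ ^ 2) / (4 * l₃) ∧ x ^ 2 = 1 / (16 * l₃ ^ 2))) := by
  have key : x ^ 2 + (y - (1 - 12 * l₃ ^ 2) / (4 * l₃)) ^ 2 - (1 + 16 * l₃ ^ 4) / (16 * l₃ ^ 2)
      = (x ^ 2 - y ^ 2 - (1 - 4 * l₃ ^ 2))
        + 2 * ((y + l₃) * (y - (1 - 8 * l₃ ^ 2) / (4 * l₃))) := by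
    field_simp
    ring
  -- The value of `x ^ 2` on the hyperbola at the second root.
  have hx : ((1 - 8 * l₃ ^ 2) / (4 * l₃)) ^ 2 + (1 - 4 * l₃ ^ 2) = 1 / (16 * l₃ ^ 2) := by
    field_simp
    ring
  constructor
  · rintro ⟨h1, h2⟩
    have h3 : (y + l₃) * (y - (1 - 8 * l₃ ^ 2) / (4 * l₃)) = 0 := by linarith
    rcases mul_eq_zero.mp h3 with h4 | h4
    · obtain rfl : y = -l₃ := by linarith
      exact .inl ⟨rfl, by linarith, by nlinarith [sq_nonneg x]⟩
    · have h5 : y = (1 - 8 * l₃ ^ 2) / (4 * l₃) := by linarith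
      rw [← h5] at hx
      exact .inr ⟨h5, by linarith⟩
  · rintro (⟨hy, hx1, -⟩ | ⟨hy, hx2⟩)
    · have h1 : x ^ 2 - y ^ 2 = 1 - 4 * l₃ ^ 2 := by rw [hy, hx1]; ring
      have h3 : y + l₃ = 0 := by linarith
      rw [h3, zero_mul] at key
      exact ⟨h1, by linarith⟩
    · rw [← hy] at hx
      have h1 : x ^ 2 - y ^ 2 = 1 - 4 * l₃ ^ 2 := by linarith
      rw [← hy, sub_self y, mul_zero] at key
      exact ⟨h1, by linarith⟩
end

section
/- Let λ₁, λ₂, λ₃ ∈ ℝ be pairwise distinct and define b₁² = ((λ₃ − λ₁)/(λ₂ − λ₁))·(1 + 4λ₃(λ₃ − λ₂)) and b₂² = ((λ₃ − λ₂)/(λ₁ − λ₂))·(1 + 4λ₃(λ₃ − λ₁)). If 3((λ₃ − λ₂)²b₁² + (λ₃ − λ₁)²b₂²) + (λ₃ − λ₁)(λ₃ − λ₂)(1 + 4λ₂(λ₃ − λ₁) + 4λ₁(λ₃ − λ₂)) = 0, then (λ₁ − λ₂)² − (λ₁ + λ₂ − 4λ₃)² = 1 − 4λ₃². -/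
/-- Derivation of equation (equation1) in Case 2 (m₁ = 1)
of Section 4: substituting formula (eqbi2) into Corollary 4.7 yields the
hyperbola equation. -/
theorem stmt_12 (l₁ l₂ l₃ b₁sq b₂sq : ℝ)
    (h12 : l₁ ≠ l₂) (h13 : l₁ ≠ l₃) (h23 : l₂ ≠ l₃)
    (hb1 : b₁sq = (l₃ - l₁) / (l₂ - l₁) * (1 + 4 * l₃ * (l₃ - l₂)))
    (hb2 : b₂sq = (l₃ - l₂) / (l₁ - l₂) * (1 + 4 * l₃ * (l₃ - l₁)))
    (h : 3 * ((l₃ - l₂) ^ 2 * b₁sq + (l₃ - l₁) ^ 2 * b₂sq) +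
      (l₃ - l₁) * (l₃ - l₂) * (1 + 4 * l₂ * (l₃ - l₁) + 4 * l₁ * (l₃ - l₂)) = 0) :
    (l₁ - l₂) ^ 2 - (l₁ + l₂ - 4 * l₃) ^ 2 = 1 - 4 * l₃ ^ 2 := by
  have hx : l₃ - l₁ ≠ 0 := sub_ne_zero.mpr h13.symm
  have hy : l₃ - l₂ ≠ 0 := sub_ne_zero.mpr h23.symm
  have hd : l₂ - l₁ ≠ 0 := sub_ne_zero.mpr h12.symm
  -- With `x = l₃ - l₁` and `y = l₃ - l₂`, the denominator `l₂ - l₁ = x - y` cancels here.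
  have hsum : (l₃ - l₂) ^ 2 * b₁sq + (l₃ - l₁) ^ 2 * b₂sq =
      -((l₃ - l₁) * (l₃ - l₂) * (1 + 4 * l₃ * ((l₃ - l₁) + (l₃ - l₂)))) := by
    have e : l₁ - l₂ = -(l₂ - l₁) := by ring
    rw [hb1, hb2, e, div_neg]
    field_simp
    ring
  rw [hsum] at h
  -- The relation becomes `-2 x y (1 + 4 l₃ (x + y) + 4 x y) = 0`, and `x y ≠ 0`.
  have key : 1 + 4 * l₃ * ((l₃ - l₁) + (l₃ - l₂)) + 4 * (l₃ - l₁) * (l₃ - l₂) = 0 := by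
    apply mul_left_cancel₀ (mul_ne_zero hx hy)
    linear_combination (-1 / 2) * h
  linear_combination -key
end

section
/- With the data of the stated setup, det D(r) = 1/cosh(r/2)³. -/
/-!
Write `x = λ₃` and `C = cosh(r/2)`, so that `sinh(r/2) = 2xC` and `C²(1 - 4x²) = 1`. Since
`s² = 1 - 3x²`, everything factors in terms of `s ± x`: `b₁² = (s - x)³/(2s)`,
`b₂² = (s + x)³/(2s)`, `f₁ = C(s + 3x)(s - x)`, `f₂ = C(s - 3x)(s + x)`, `gᵢ = (C - 1)(1 + C + fᵢ)`.
The rank-one term `b₁²b₂²g₁g₂` cancels in the determinant, leaving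
`f₁f₂ + b₂²f₁g₂ + b₁²f₂g₁`. As `b₁² + b₂² = 1` and `b₂²f₁ + b₁²f₂ = C(1 - 16x⁴)`, this equals
`C f₁f₂ + C(C² - 1)(1 - 16x⁴)`, where `f₁f₂ = 1 - 12x²` and `C² - 1 = 4x²C²`. Hence the determinant
is `C(1 - 4x²)² = 1/C³`.
-/

/-- The Jacobi coefficient function `f_λ(t) = cosh(t/2) − 2λ sinh(t/2)`. -/
noncomputable def jacobiF (lam t : ℝ) : ℝ :=
  Real.cosh (t / 2) - 2 * lam * Real.sinh (t / 2)

/-- The Jacobi coefficient function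
`g_λ(t) = (cosh(t/2) − 1)(1 + 2cosh(t/2) − 2λ sinh(t/2))`. -/
noncomputable def jacobiG (lam t : ℝ) : ℝ :=
  (Real.cosh (t / 2) - 1) * (1 + 2 * Real.cosh (t / 2) - 2 * lam * Real.sinh (t / 2))

/-- With the setup of Case 2 (m₁ = 1) of Section 5,
`det D(r) = sech(r/2)³`. Here `r = 2 artanh(2λ₃)`, i.e. `tanh(r/2) = 2λ₃`
(and then `r ≠ 0` since `λ₃ ≠ 0`). -/
theorem stmt_14 (l₃ : ℝ) (h0 : l₃ ≠ 0) (h : |l₃| < 1 / 2)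
    (s l₁ l₂ b₁ b₂ r : ℝ)
    (hs : s = Real.sqrt (1 - 3 * l₃ ^ 2))
    (h1 : l₁ = (3 * l₃ - s) / 2) (h2 : l₂ = (3 * l₃ + s) / 2)
    (hb1 : b₁ = Real.sqrt ((l₃ - l₁) / (l₂ - l₁) * (1 + 4 * l₃ * (l₃ - l₂))))
    (hb2 : b₂ = Real.sqrt ((l₃ - l₂) / (l₁ - l₂) * (1 + 4 * l₃ * (l₃ - l₁))))
    (hr : Real.tanh (r / 2) = 2 * l₃)
    (D : ℝ → Matrix (Fin 2) (Fin 2) ℝ)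
    (hD : ∀ t, D t = !![jacobiF l₁ t + b₁ ^ 2 * jacobiG l₁ t, b₁ * b₂ * jacobiG l₁ t;
        b₁ * b₂ * jacobiG l₂ t, jacobiF l₂ t + b₂ ^ 2 * jacobiG l₂ t]) :
    (D r).det = 1 / Real.cosh (r / 2) ^ 3 := by
  have hx := abs_lt.mp h
  have hx2 : 0 < 1 - 4 * l₃ ^ 2 := by nlinarith
  have hs2 : s ^ 2 = 1 - 3 * l₃ ^ 2 := by
    rw [hs, Real.sq_sqrt]
    nlinarith [sq_nonneg l₃]
  have hs0 : 0 < s := by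
    rw [hs]
    apply Real.sqrt_pos.mpr
    nlinarith [sq_nonneg l₃]
  have hsx : |l₃| < s := abs_lt_of_sq_lt_sq (by linarith) hs0.le
  obtain ⟨hsx1, hsx2⟩ := abs_lt.mp hsx
  have hb1' : b₁ ^ 2 = (s - l₃) ^ 3 / (2 * s) := by
    have e : (l₃ - l₁) / (l₂ - l₁) * (1 + 4 * l₃ * (l₃ - l₂)) = (s - l₃) ^ 3 / (2 * s) := by
      have e1 : l₂ - l₁ = s := by rw [h1, h2]; ring
      rw [e1, h1, h2]
      field_simp
      linear_combination 2 * (l₃ - s) * hs2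
    rw [hb1, e, Real.sq_sqrt]
    have : 0 < s - l₃ := by linarith
    positivity
  have hb2' : b₂ ^ 2 = (s + l₃) ^ 3 / (2 * s) := by
    have e : (l₃ - l₂) / (l₁ - l₂) * (1 + 4 * l₃ * (l₃ - l₁)) = (s + l₃) ^ 3 / (2 * s) := by
      have e1 : l₁ - l₂ = -s := by rw [h1, h2]; ring
      rw [e1, h1, h2]
      field_simp
      linear_combination 2 * (-l₃ - s) * hs2
    rw [hb2, e, Real.sq_sqrt]
    have : 0 < s + l₃ := by linarith
    positivity
  have hC : 0 < Real.cosh (r / 2) := Real.cosh_pos _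
  have hS : Real.sinh (r / 2) = 2 * l₃ * Real.cosh (r / 2) := by
    rw [Real.tanh_eq_sinh_div_cosh, div_eq_iff hC.ne'] at hr
    exact hr
  have hCS := Real.cosh_sq (r / 2)
  rw [hS] at hCS
  have hf1 : jacobiF l₁ r = Real.cosh (r / 2) * ((s + 3 * l₃) * (s - l₃)) := by
    rw [jacobiF, hS, h1]
    linear_combination -Real.cosh (r / 2) * hs2
  have hf2 : jacobiF l₂ r = Real.cosh (r / 2) * ((s - 3 * l₃) * (s + l₃)) := by
    rw [jacobiF, hS, h2]
    linear_combination -Real.cosh (r / 2) * hs2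
  have hg (l : ℝ) : jacobiG l r =
      (Real.cosh (r / 2) - 1) * (1 + Real.cosh (r / 2) + jacobiF l r) := by
    rw [jacobiG, jacobiF]
    ring
  have hsum : b₁ ^ 2 + b₂ ^ 2 = 1 := by
    rw [hb1', hb2']
    field_simp
    linear_combination 2 * s * hs2
  have hmix : b₂ ^ 2 * jacobiF l₁ r + b₁ ^ 2 * jacobiF l₂ r
      = Real.cosh (r / 2) * (1 - 16 * l₃ ^ 4) := by
    rw [hb1', hb2', hf1, hf2]
    field_simp
    linear_combination 2 * s * (s ^ 2 + 3 * l₃ ^ 2 + 1) * hs2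
  have hprod : jacobiF l₁ r * jacobiF l₂ r = 1 - 12 * l₃ ^ 2 := by
    have e : (s ^ 2 - 9 * l₃ ^ 2) * (s ^ 2 - l₃ ^ 2) = (1 - 12 * l₃ ^ 2) * (1 - 4 * l₃ ^ 2) := by
      rw [hs2]; ring
    rw [hf1, hf2]
    linear_combination Real.cosh (r / 2) ^ 2 * e + (1 - 12 * l₃ ^ 2) * hCS
  have hdet : (D r).det = jacobiF l₁ r * jacobiF l₂ r
      + b₂ ^ 2 * jacobiF l₁ r * jacobiG l₂ r + b₁ ^ 2 * jacobiF l₂ r * jacobiG l₁ r := by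
    rw [hD, Matrix.det_fin_two_of]
    ring
  have hred : (D r).det = Real.cosh (r / 2) * (1 - 4 * l₃ ^ 2) ^ 2 := by
    rw [hdet, hg, hg]
    generalize Real.cosh (r / 2) = C at *
    linear_combination (C ^ 2 - 1) * hmix + (C - 1) * (jacobiF l₁ r * jacobiF l₂ r) * hsum
      + C * hprod + C * (1 + 4 * l₃ ^ 2) * hCS
  rw [hred, eq_div_iff (by positivity)]
  linear_combination (Real.cosh (r / 2) ^ 2 * (1 - 4 * l₃ ^ 2) + 1) * hCS
end

section
/- With the data of the stated setup, let D'(r) denote the entrywise derivative of D at t = r. Then det(D'(r)) = −(1/4)·(1/cosh(r/2)³) and the derivative of the function t ↦ det D(t) vanishes at t = r. -/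
lemma hasDerivAt_jacobiF (lam t : ℝ) :
    HasDerivAt (jacobiF lam) (Real.sinh (t / 2) / 2 - lam * Real.cosh (t / 2)) t := by
  have hid : HasDerivAt (fun t : ℝ => t / 2) (1 / 2) t := (hasDerivAt_id t).div_const 2
  have hc := hid.cosh
  have hs := hid.sinh
  refine (hc.sub (hs.const_mul (2 * lam))).congr_deriv ?_
  ring

lemma hasDerivAt_jacobiG (lam t : ℝ) :
    HasDerivAt (jacobiG lam)
      (Real.sinh (t / 2) / 2 * (1 + 2 * Real.cosh (t / 2) - 2 * lam * Real.sinh (t / 2)) +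
        (Real.cosh (t / 2) - 1) * (Real.sinh (t / 2) - lam * Real.cosh (t / 2))) t := by
  have hid : HasDerivAt (fun t : ℝ => t / 2) (1 / 2) t := (hasDerivAt_id t).div_const 2
  have hc := hid.cosh
  have hs := hid.sinh
  refine ((hc.sub_const 1).mul
    (((hc.const_mul 2).const_add 1).sub (hs.const_mul (2 * lam)))).congr_deriv ?_
  simp only [Pi.sub_apply]
  ring

/-- The squares of `b₁, b₂`, expressed through `p = λ₃(3 - 8λ₃²)/s`; `|p| ≤ 1` is what makes the
radicands nonnegative. -/
lemma sq_weights (l s l₁ l₂ : ℝ) (h : |l| < 1 / 2) (hs : s = Real.sqrt (1 - 3 * l ^ 2))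
    (h1 : l₁ = (3 * l - s) / 2) (h2 : l₂ = (3 * l + s) / 2) :
    s ^ 2 = 1 - 3 * l ^ 2 ∧ ∃ p : ℝ, p * s = 3 * l - 8 * l ^ 3 ∧
      Real.sqrt ((l - l₁) / (l₂ - l₁) * (1 + 4 * l * (l - l₂))) ^ 2 = (1 - p) / 2 ∧
      Real.sqrt ((l - l₂) / (l₁ - l₂) * (1 + 4 * l * (l - l₁))) ^ 2 = (1 + p) / 2 := by
  have hl : 4 * l ^ 2 < 1 := by
    have := abs_lt.mp h
    nlinarith
  have hpos : 0 < 1 - 3 * l ^ 2 := by nlinarith [sq_nonneg l]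
  have hs0 : 0 < s := hs ▸ Real.sqrt_pos.mpr hpos
  have hs2 : s ^ 2 = 1 - 3 * l ^ 2 := by rw [hs, Real.sq_sqrt hpos.le]
  obtain ⟨p, hp⟩ : ∃ p : ℝ, p * s = 3 * l - 8 * l ^ 3 :=
    ⟨(3 * l - 8 * l ^ 3) / s, by field_simp⟩
  have hp1 : |p| ≤ 1 := by
    rw [← sq_le_one_iff_abs_le_one]
    -- `s² - (3l - 8l³)² = (1 - 4l²)³`
    have h3 : 0 < (1 - 4 * l ^ 2) ^ 3 := pow_pos (by linarith) 3
    have h4 : (p * s) ^ 2 ≤ s ^ 2 := by rw [hp, hs2]; linarith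
    have h5 : 0 < s ^ 2 := by positivity
    rw [mul_pow] at h4
    nlinarith
  have hp2 := abs_le.mp hp1
  have e1 : (l - l₁) / (l₂ - l₁) * (1 + 4 * l * (l - l₂)) = (1 - p) / 2 := by
    have : l₂ - l₁ = s := by rw [h1, h2]; ring
    rw [this, h1, h2]
    field_simp
    linear_combination (-4 * l) * hs2 + 2 * hp
  have e2 : (l - l₂) / (l₁ - l₂) * (1 + 4 * l * (l - l₁)) = (1 + p) / 2 := by
    have : l₁ - l₂ = -s := by rw [h1, h2]; ring
    rw [this, h1, h2]
    field_simp
    linear_combination (4 * l) * hs2 - 2 * hp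
  refine ⟨hs2, p, hp, ?_, ?_⟩
  · rw [e1, Real.sq_sqrt (by linarith)]
  · rw [e2, Real.sq_sqrt (by linarith)]

lemma sinh_cosh_rel (l x : ℝ) (hr : Real.tanh x = 2 * l) :
    Real.sinh x = 2 * l * Real.cosh x ∧ Real.cosh x ^ 2 * (1 - 4 * l ^ 2) = 1 := by
  have hC := Real.cosh_pos x
  have hS : Real.sinh x = 2 * l * Real.cosh x := by
    rw [Real.tanh_eq_sinh_div_cosh, div_eq_iff hC.ne'] at hr
    exact hr
  refine ⟨hS, ?_⟩
  have := Real.cosh_sq x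
  rw [hS] at this
  linear_combination this

/-- The formula for `det D'(r)`, cleared of denominators, with `C = cosh(r/2)`, `S = sinh(r/2)`,
`b₁² = (1 - p)/2` and `b₂² = (1 + p)/2`. -/
lemma det_deriv_identity (l s p C : ℝ) (hs : s ^ 2 = 1 - 3 * l ^ 2)
    (hp : p * s = 3 * l - 8 * l ^ 3) (hC : C ^ 2 * (1 - 4 * l ^ 2) = 1)
    (S l₁ l₂ : ℝ) (hS : S = 2 * l * C) (h1 : l₁ = (3 * l - s) / 2) (h2 : l₂ = (3 * l + s) / 2) :
    ((S / 2 - l₁ * C) * (S / 2 - l₂ * C)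
      + (1 + p) / 2 * ((S / 2 - l₁ * C)
        * (S / 2 * (1 + 2 * C - 2 * l₂ * S) + (C - 1) * (S - l₂ * C)))
      + (1 - p) / 2 * ((S / 2 - l₂ * C)
        * (S / 2 * (1 + 2 * C - 2 * l₁ * S) + (C - 1) * (S - l₁ * C)))) * (4 * C ^ 3) = -1 := by
  subst hS h1 h2
  grind

/-- The vanishing of `(det D)'(r)`, in the notation of `det_deriv_identity`. -/
lemma deriv_det_identity (l s p C : ℝ) (hs : s ^ 2 = 1 - 3 * l ^ 2)
    (hp : p * s = 3 * l - 8 * l ^ 3) (hC : C ^ 2 * (1 - 4 * l ^ 2) = 1)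
    (S l₁ l₂ : ℝ) (hS : S = 2 * l * C) (h1 : l₁ = (3 * l - s) / 2) (h2 : l₂ = (3 * l + s) / 2) :
    (S / 2 - l₁ * C) * (C - 2 * l₂ * S) + (C - 2 * l₁ * S) * (S / 2 - l₂ * C)
      + (1 + p) / 2 * ((S / 2 - l₁ * C) * ((C - 1) * (1 + 2 * C - 2 * l₂ * S))
        + (C - 2 * l₁ * S)
          * (S / 2 * (1 + 2 * C - 2 * l₂ * S) + (C - 1) * (S - l₂ * C)))
      + (1 - p) / 2 * ((S / 2 - l₂ * C) * ((C - 1) * (1 + 2 * C - 2 * l₁ * S))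
        + (C - 2 * l₂ * S)
          * (S / 2 * (1 + 2 * C - 2 * l₁ * S) + (C - 1) * (S - l₁ * C))) = 0 := by
  subst hS h1 h2
  grind

/-- With the setup of Case 2 (m₁ = 1) of Section 5,
the entrywise derivative `D'(r)` satisfies `det D'(r) = −(1/4)·sech(r/2)³`,
and `(det ∘ D)'(r) = 0`. Here `r = 2 artanh(2λ₃)`, i.e. `tanh(r/2) = 2λ₃`
(and then `r ≠ 0` since `λ₃ ≠ 0`). -/
theorem stmt_15 (l₃ : ℝ) (h0 : l₃ ≠ 0) (h : |l₃| < 1 / 2)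
    (s l₁ l₂ b₁ b₂ r : ℝ)
    (hs : s = Real.sqrt (1 - 3 * l₃ ^ 2))
    (h1 : l₁ = (3 * l₃ - s) / 2) (h2 : l₂ = (3 * l₃ + s) / 2)
    (hb1 : b₁ = Real.sqrt ((l₃ - l₁) / (l₂ - l₁) * (1 + 4 * l₃ * (l₃ - l₂))))
    (hb2 : b₂ = Real.sqrt ((l₃ - l₂) / (l₁ - l₂) * (1 + 4 * l₃ * (l₃ - l₁))))
    (hr : Real.tanh (r / 2) = 2 * l₃)
    (D : ℝ → Matrix (Fin 2) (Fin 2) ℝ)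
    (hD : ∀ t, D t = !![jacobiF l₁ t + b₁ ^ 2 * jacobiG l₁ t, b₁ * b₂ * jacobiG l₁ t;
        b₁ * b₂ * jacobiG l₂ t, jacobiF l₂ t + b₂ ^ 2 * jacobiG l₂ t])
    (D' : Matrix (Fin 2) (Fin 2) ℝ)
    (hD' : ∀ i j, D' i j = deriv (fun t => D t i j) r) :
    D'.det = -(1 / 4) * (1 / Real.cosh (r / 2) ^ 3) ∧
      deriv (fun t => (D t).det) r = 0 := by
  obtain ⟨hs2, p, hp, hB1, hB2⟩ := sq_weights l₃ s l₁ l₂ h hs h1 h2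
  rw [← hb1] at hB1
  rw [← hb2] at hB2
  obtain ⟨hS, hC⟩ := sinh_cosh_rel l₃ (r / 2) hr
  have hCpos := Real.cosh_pos (r / 2)
  have f1 := hasDerivAt_jacobiF l₁ r
  have f2 := hasDerivAt_jacobiF l₂ r
  have g1 := hasDerivAt_jacobiG l₁ r
  have g2 := hasDerivAt_jacobiG l₂ r
  constructor
  · have key := det_deriv_identity l₃ s p _ hs2 hp hC _ l₁ l₂ hS h1 h2
    have d00 : D' 0 0 = _ := (hD' 0 0).trans
      (by simp only [hD]; exact (f1.add (g1.const_mul (b₁ ^ 2))).deriv)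
    have d01 : D' 0 1 = _ := (hD' 0 1).trans
      (by simp only [hD]; exact (g1.const_mul (b₁ * b₂)).deriv)
    have d10 : D' 1 0 = _ := (hD' 1 0).trans
      (by simp only [hD]; exact (g2.const_mul (b₁ * b₂)).deriv)
    have d11 : D' 1 1 = _ := (hD' 1 1).trans
      (by simp only [hD]; exact (f2.add (g2.const_mul (b₂ ^ 2))).deriv)
    rw [Matrix.det_fin_two, d00, d01, d10, d11]
    rw [← hB1, ← hB2] at key
    have hrhs : -(1 / 4) * (1 / Real.cosh (r / 2) ^ 3) = -1 / (4 * Real.cosh (r / 2) ^ 3) := by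
      field_simp
    rw [hrhs, eq_div_iff (by positivity)]
    linear_combination key
  · have key := deriv_det_identity l₃ s p _ hs2 hp hC _ l₁ l₂ hS h1 h2
    have hdet : (fun t => (D t).det) = fun t => jacobiF l₁ t * jacobiF l₂ t
        + b₂ ^ 2 * (jacobiF l₁ t * jacobiG l₂ t) + b₁ ^ 2 * (jacobiF l₂ t * jacobiG l₁ t) := by
      funext t
      rw [hD, Matrix.det_fin_two_of]
      ring
    rw [hdet]
    refine (((f1.mul f2).add ((f1.mul g2).const_mul (b₂ ^ 2))).add
      ((f2.mul g1).const_mul (b₁ ^ 2))).deriv.trans ?_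
    rw [← hB1, ← hB2] at key
    simp only [jacobiF, jacobiG]
    linear_combination key
end
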